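/- Let 0 < T < T_c. Then there exists a unique β₊ ∈ (0,1) such that −T_c·β₊ + (T/2)·ln((1+β₊)/(1−β₊)) = 0; that is, the logarithmic free energy density f has a unique positive critical point β₊ in (0,1) (the positive binodal point). -/

import Mathlib

/-! Since `ln ((1 + β) / (1 - β)) = 2 artanh β`, dividing by `T β` turns the equation into
`artanh β / β = Tc / T`. As `artanh` is strictly convex on `[0, 1)` and vanishes at `0`, its secant
slope `artanh β / β` is strictly increasing on `(0, 1)`; it goes from `artanh' 0 = 1` to `∞`, so it
takes each value greater than `1` exactly once. -/

open Filter Real Set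
open scoped Topology

theorem strictMonoOn_div_self_of_strictConvexOn {𝕜 : Type*} [Field 𝕜] [LinearOrder 𝕜]
    [IsStrictOrderedRing 𝕜] {s : Set 𝕜} {f : 𝕜 → 𝕜} (hf : StrictConvexOn 𝕜 s f)
    (h0 : 0 ∈ s) (hf0 : f 0 = 0) : StrictMonoOn (fun x ↦ f x / x) (s \ {0}) :=
  fun x hx y hy hxy ↦ by simpa [hf0] using hf.secant_strict_mono h0 hx.1 hy.1 hx.2 hy.2 hxy

theorem hasDerivAt_artanh {x : ℝ} (hx : x ∈ Ioo (-1) 1) :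
    HasDerivAt artanh (1 - x ^ 2)⁻¹ x := by
  have hadd : 0 < 1 + x := by linarith [hx.1]
  have hsub : 0 < 1 - x := by linarith [hx.2]
  have hquot : HasDerivAt (fun y : ℝ ↦ (1 + y) / (1 - y)) (2 / (1 - x) ^ 2) x :=
    (((hasDerivAt_id' x).const_add 1).div ((hasDerivAt_id' x).const_sub 1) hsub.ne').congr_deriv
      (by ring)
  have hlog : HasDerivAt (fun y : ℝ ↦ 1 / 2 * log ((1 + y) / (1 - y))) (1 - x ^ 2)⁻¹ x :=
    ((hquot.log (div_pos hadd hsub).ne').const_mul (1 / 2)).congr_deriv (by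
      rw [show 1 - x ^ 2 = (1 + x) * (1 - x) by ring]
      field_simp)
  refine hlog.congr_of_eventuallyEq ?_
  filter_upwards [Ioo_mem_nhds hx.1 hx.2] with y hy
  exact artanh_eq_half_log (Ioo_subset_Icc_self hy)

theorem continuousOn_artanh : ContinuousOn artanh (Ioo (-1) 1) :=
  fun _ hx ↦ (hasDerivAt_artanh hx).continuousAt.continuousWithinAt

theorem strictConvexOn_artanh : StrictConvexOn ℝ (Ico 0 1) artanh := by
  refine StrictMonoOn.strictConvexOn_of_deriv (convex_Ico 0 1)
    (continuousOn_artanh.mono (Ico_subset_Ioo_left (by norm_num))) ?_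
  rw [interior_Ico]
  intro x hx y hy hxy
  rw [(hasDerivAt_artanh ⟨by linarith [hx.1], hx.2⟩).deriv,
    (hasDerivAt_artanh ⟨by linarith [hy.1], hy.2⟩).deriv]
  have hy2 : 0 < 1 - y ^ 2 := by nlinarith [hy.1, hy.2]
  have hxy2 : x ^ 2 < y ^ 2 := pow_lt_pow_left₀ hxy hx.1.le two_ne_zero
  gcongr

theorem tendsto_artanh_nhdsLT_one : Tendsto artanh (𝓝[<] 1) atTop := by
  refine tendsto_atTop.2 fun M ↦ ?_
  filter_upwards [Ioo_mem_nhdsLT (tanh_lt_one M)] with x hx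
  rw [← artanh_tanh M]
  exact artanh_le_artanh (neg_one_lt_tanh M) hx.2 hx.1.le

theorem strictMonoOn_artanh_div_self : StrictMonoOn (fun u ↦ artanh u / u) (Ioo 0 1) := by
  simpa only [Ico_sdiff_left] using strictMonoOn_div_self_of_strictConvexOn strictConvexOn_artanh
    (left_mem_Ico.2 one_pos) artanh_zero

theorem tendsto_artanh_div_self_nhdsNE_zero :
    Tendsto (fun u ↦ artanh u / u) (𝓝[≠] 0) (𝓝 1) := by
  have hderiv : HasDerivAt artanh 1 0 := by simpa using hasDerivAt_artanh (x := 0) (by norm_num)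
  simpa [slope_fun_def_field] using hderiv.tendsto_slope

theorem tendsto_artanh_div_self_nhdsLT_one :
    Tendsto (fun u ↦ artanh u / u) (𝓝[<] 1) atTop := by
  have hinv : Tendsto (fun u : ℝ ↦ u⁻¹) (𝓝[<] 1) (𝓝 1) := by
    simpa using (tendsto_inv₀ (one_ne_zero (α := ℝ))).mono_left nhdsWithin_le_nhds
  simpa only [div_eq_mul_inv] using tendsto_artanh_nhdsLT_one.atTop_mul_pos one_pos hinv

theorem surjOn_artanh_div_self : SurjOn (fun u ↦ artanh u / u) (Ioo 0 1) (Ioi 1) := by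
  refine isPreconnected_Ioo.intermediate_value_Ioi
    (le_principal_iff.2 (Ioo_mem_nhdsGT one_pos)) (le_principal_iff.2 (Ioo_mem_nhdsLT one_pos))
    ?_ (tendsto_artanh_div_self_nhdsNE_zero.mono_left (nhdsGT_le_nhdsNE 0))
    tendsto_artanh_div_self_nhdsLT_one
  exact (continuousOn_artanh.mono (Ioo_subset_Ioo_left (by norm_num))).div continuousOn_id
    fun u hu ↦ hu.1.ne'

theorem existsUnique_artanh_div_self_eq {k : ℝ} (hk : 1 < k) :
    ∃! u : ℝ, u ∈ Ioo 0 1 ∧ artanh u / u = k := by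
  obtain ⟨u, hu, huk⟩ := surjOn_artanh_div_self hk
  exact ⟨u, ⟨hu, huk⟩, fun v ⟨hv, hvk⟩ ↦
    strictMonoOn_artanh_div_self.injOn hv hu (hvk.trans huk.symm)⟩

theorem neg_mul_add_log_eq_zero_iff_artanh_div_self_eq {T Tc u : ℝ} (hT : T ≠ 0)
    (hu : u ∈ Ioo (-1) 1) (hu0 : u ≠ 0) :
    -Tc * u + T / 2 * log ((1 + u) / (1 - u)) = 0 ↔ artanh u / u = Tc / T := by
  have hlog : T / 2 * log ((1 + u) / (1 - u)) = T * artanh u := by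
    rw [artanh_eq_half_log (Ioo_subset_Icc_self hu)]
    ring
  rw [hlog, div_eq_div_iff hu0 hT]
  constructor <;> intro h <;> linarith

/-- below the critical temperature there is a unique `β₊ ∈ (0,1)` with
`−T_c β₊ + (T/2)·ln((1+β₊)/(1−β₊)) = 0` (the positive binodal point). -/
theorem unique_positive_binodal_point
    (T Tc : ℝ) (hT : 0 < T) (hTTc : T < Tc) :
    ∃! β : ℝ, β ∈ Set.Ioo (0 : ℝ) 1 ∧
      -Tc * β + T / 2 * Real.log ((1 + β) / (1 - β)) = 0 := by
  have hslope (β : ℝ) : (β ∈ Ioo 0 1 ∧ -Tc * β + T / 2 * log ((1 + β) / (1 - β)) = 0) ↔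
      (β ∈ Ioo 0 1 ∧ artanh β / β = Tc / T) :=
    and_congr_right fun hβ ↦ neg_mul_add_log_eq_zero_iff_artanh_div_self_eq hT.ne'
      ⟨by linarith [hβ.1], hβ.2⟩ hβ.1.ne'
  simpa only [hslope] using existsUnique_artanh_div_self_eq ((one_lt_div hT).2 hTTc)
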